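/- Let m, n, p be positive integers and let (a,b,c) ∈ ℝ³ with a² + b² + c² = 1. Then the maximum over (x,y,z) ∈ [0,π]³ of [2√2·cos(mx)/√(π³(n²+p²))]² · [b·p·sin(ny)·cos(pz) − c·n·cos(ny)·sin(pz)]² equals 8·max{b²p², c²n²}/(π³(n²+p²)). In other words, the squared L∞-norm over the cube of the inner product of (a,b,c) with V_{m,n,p} equals 8·max{b²p², c²n²}/(π³(n²+p²)). -/

import Mathlib

/-!
With `A = b p` and `B = c n`, Cauchy–Schwarz against the unit vector `(sin u, cos u)` gives
`(A sin u cos v - B cos u sin v)² ≤ A² cos² v + B² sin² v ≤ max A² B²`, and the prefactor is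
`8 cos² (m x) / (π³ (n² + p²))`, which is largest at `x = 0`. Both entries of the maximum are
attained with `x = 0`: `A²` at `(y, z) = (π / (2n), 0)` and `B²` at `(y, z) = (0, π / (2p))`.
-/

open Real Set

lemma sq_sin_cos_sub_le_max (A B u v : ℝ) :
    (A * sin u * cos v - B * cos u * sin v) ^ 2 ≤ max (A ^ 2) (B ^ 2) := by
  have hu := sin_sq_add_cos_sq u
  have hv := sin_sq_add_cos_sq v
  calc (A * sin u * cos v - B * cos u * sin v) ^ 2
      ≤ (sin u ^ 2 + cos u ^ 2) * (A ^ 2 * cos v ^ 2 + B ^ 2 * sin v ^ 2) := by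
        nlinarith [sq_nonneg (sin u * (B * sin v) + cos u * (A * cos v))]
    _ = A ^ 2 * cos v ^ 2 + B ^ 2 * sin v ^ 2 := by rw [hu, one_mul]
    _ ≤ max (A ^ 2) (B ^ 2) * cos v ^ 2 + max (A ^ 2) (B ^ 2) * sin v ^ 2 := by
        gcongr
        · exact le_max_left _ _
        · exact le_max_right _ _
    _ = max (A ^ 2) (B ^ 2) := by rw [← mul_add, add_comm, hv, mul_one]

lemma prefactor_sq {D : ℝ} (hD : 0 ≤ D) (t : ℝ) :
    (2 * √2 * t / √D) ^ 2 = 8 * t ^ 2 / D := by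
  rw [div_pow, sq_sqrt hD, mul_pow, mul_pow, sq_sqrt (by norm_num : (0 : ℝ) ≤ 2)]
  norm_num

lemma pi_div_two_div_mem (k : ℕ) (hk : 0 < k) : π / 2 / k ∈ Icc 0 π := by
  have h1 : (1 : ℝ) ≤ k := by exact_mod_cast hk
  refine ⟨by positivity, (div_le_self (by positivity) h1).trans ?_⟩
  linarith [pi_pos]

/-- for a unit vector `(a,b,c)`, the maximum over the cube `[0,π]³` of
`[2√2·cos(mx)/√(π³(n²+p²))]²·[b·p·sin(ny)·cos(pz) − c·n·cos(ny)·sin(pz)]²`, i.e. the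
squared L^∞-norm of `(a,b,c)·V_{m,n,p}`, equals `8·max{b²p², c²n²}/(π³(n²+p²))`. -/
theorem stmt8 (m n p : ℕ) (hm : 0 < m) (hn : 0 < n) (hp : 0 < p)
    (a b c : ℝ) (habc : a ^ 2 + b ^ 2 + c ^ 2 = 1) :
    IsGreatest
      ((fun ξ : ℝ × ℝ × ℝ =>
          (2 * Real.sqrt 2 * Real.cos (m * ξ.1) /
              Real.sqrt (π ^ 3 * ((n : ℝ) ^ 2 + (p : ℝ) ^ 2))) ^ 2 *
          (b * (p : ℝ) * Real.sin (n * ξ.2.1) * Real.cos (p * ξ.2.2) -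
           c * (n : ℝ) * Real.cos (n * ξ.2.1) * Real.sin (p * ξ.2.2)) ^ 2) ''
        (Icc 0 π ×ˢ Icc 0 π ×ˢ Icc 0 π))
      (8 * max (b ^ 2 * (p : ℝ) ^ 2) (c ^ 2 * (n : ℝ) ^ 2) /
        (π ^ 3 * ((n : ℝ) ^ 2 + (p : ℝ) ^ 2))) := by
  have hn' : (n : ℝ) ≠ 0 := by positivity
  have hp' : (p : ℝ) ≠ 0 := by positivity
  have h0 : (0 : ℝ) ∈ Icc 0 π := ⟨le_rfl, pi_pos.le⟩
  have hD : 0 ≤ π ^ 3 * ((n : ℝ) ^ 2 + (p : ℝ) ^ 2) := by positivity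
  constructor
  · rcases max_choice (b ^ 2 * (p : ℝ) ^ 2) (c ^ 2 * (n : ℝ) ^ 2) with h | h
    · refine ⟨(0, π / 2 / n, 0), ⟨h0, pi_div_two_div_mem n hn, h0⟩, ?_⟩
      simp only [prefactor_sq hD, h, mul_div_cancel₀ _ hn', mul_zero, sin_zero, cos_zero,
        sin_pi_div_two, cos_pi_div_two]
      ring
    · refine ⟨(0, 0, π / 2 / p), ⟨h0, h0, pi_div_two_div_mem p hp⟩, ?_⟩
      simp only [prefactor_sq hD, h, mul_div_cancel₀ _ hp', mul_zero, sin_zero, cos_zero,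
        sin_pi_div_two, cos_pi_div_two]
      ring
  · rintro _ ⟨⟨x, y, z⟩, -, rfl⟩
    simp only [prefactor_sq hD]
    have hQ := sq_sin_cos_sub_le_max (b * p) (c * n) (n * y) (p * z)
    rw [mul_pow, mul_pow] at hQ
    rw [div_mul_eq_mul_div]
    gcongr
    linarith [cos_sq_le_one (m * x)]
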